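/- arXiv:2001.11648 — 3 statements merged into one kernel-verified Lean document; each statement's English description precedes it below -/
import Mathlib

section
/- Lemma 1 (IoT layer): if x ∈ F attains the infimum of T over F, i.e. T(x) ≤ T(y) for all y ∈ F, then the IoT power constraint holds with equality: P_pI + P_cI = P_tI. -/
open Real

structure Pt where
  m : ℝ
  k : ℝ
  PpI : ℝ
  PcI : ℝ
  PpF : ℝ
  PcF : ℝ
  PpC : ℝ

/-- Feasibility of a point `x = (m, k, P_pI, P_cI, P_pF, P_cF, P_pC)`. -/
def Feasible (B bI bF bC PtI PtF PtC : ℝ) (x : Pt) : Prop :=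
  0 ≤ x.k ∧ x.k ≤ x.m ∧ x.m ≤ B ∧
  bI < x.PpI ∧ 0 < x.PcI ∧ x.PpI + x.PcI ≤ PtI ∧
  bF < x.PpF ∧ 0 < x.PcF ∧ x.PpF + x.PcF ≤ PtF ∧
  bC < x.PpC ∧ x.PpC ≤ PtC

/-- IoT-layer latency. -/
noncomputable def TIoT (B β cI aI bI : ℝ) (x : Pt) : ℝ :=
  cI * (B - x.m) * ((x.PpI - bI) / aI) ^ (-(1 / β))

/-- Fog-layer latency. -/
noncomputable def TFog (β cF aF bF WIF g : ℝ) (x : Pt) : ℝ :=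
  x.m / (WIF * Real.logb 2 (1 + g * x.PcI)) +
    cF * (x.m - x.k) * ((x.PpF - bF) / aF) ^ (-(1 / β))

/-- Cloud-layer latency. -/
noncomputable def TCloud (β cC aC bC WIF WFC g h : ℝ) (x : Pt) : ℝ :=
  x.m / (WIF * Real.logb 2 (1 + g * x.PcI)) +
    x.k / (WFC * Real.logb 2 (1 + h * x.PcF)) +
    cC * x.k * ((x.PpC - bC) / aC) ^ (-(1 / β))

/-- Total latency `T = max (T_I, T_F, T_C)`. -/
noncomputable def Ttot (B β cI cF cC aI aF aC bI bF bC WIF WFC g h : ℝ) (x : Pt) : ℝ :=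
  max (TIoT B β cI aI bI x) (max (TFog β cF aF bF WIF g x) (TCloud β cC aC bC WIF WFC g h x))

/-!
Splitting unused IoT power between `P_pI` and `P_cI` speeds up both local processing and the uplink.
The IoT latency drops if `m < B`, the fog and cloud latencies drop if `0 < m`, and a latency that
fails to drop is zero, which is still below the maximum because some bits have to be processed.
So the maximum drops without touching the offloading decision or the other layers' powers.
-/

section Factors

variable {β a b W g p q : ℝ}

/-- The time needed per unit of computation at power `p`, for the power model with scale `a`,
offset `b` and exponent `β`. -/
noncomputable def unitProcessingTime (β a b p : ℝ) : ℝ :=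
  ((p - b) / a) ^ (-(1 / β))

/-- The Shannon rate of a link with bandwidth `W` and normalized gain `g` at transmit power `p`. -/
noncomputable def linkRate (W g p : ℝ) : ℝ :=
  W * Real.logb 2 (1 + g * p)

lemma unitProcessingTime_pos (ha : 0 < a) (hp : b < p) : 0 < unitProcessingTime β a b p :=
  Real.rpow_pos_of_pos (div_pos (sub_pos.2 hp) ha) _

lemma strictAntiOn_unitProcessingTime (hβ : 0 < β) (ha : 0 < a) :
    StrictAntiOn (unitProcessingTime β a b) (Set.Ioi b) := fun _ hp _ _ hpq =>
  Real.rpow_lt_rpow_of_neg (div_pos (sub_pos.2 hp) ha)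
    (div_lt_div_of_pos_right (sub_lt_sub_right hpq b) ha) (neg_neg_of_pos (one_div_pos.2 hβ))

lemma linkRate_pos (hW : 0 < W) (hg : 0 < g) (hp : 0 < p) : 0 < linkRate W g p :=
  mul_pos hW (Real.logb_pos one_lt_two (lt_add_of_pos_right 1 (mul_pos hg hp)))

lemma strictMonoOn_linkRate (hW : 0 < W) (hg : 0 < g) :
    StrictMonoOn (linkRate W g) (Set.Ici 0) := by
  intro p hp q _ hpq
  have hsnr : 1 + g * p < 1 + g * q := by gcongr
  have hpos : 0 < 1 + g * p := add_pos_of_pos_of_nonneg one_pos (mul_nonneg hg.le hp)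
  exact mul_lt_mul_of_pos_left (Real.logb_lt_logb one_lt_two hpos hsnr) hW

lemma div_linkRate_lt_div_linkRate {m : ℝ} (hm : 0 < m) (hW : 0 < W) (hg : 0 < g) (hp : 0 < p)
    (hpq : p < q) : m / linkRate W g q < m / linkRate W g p :=
  div_lt_div_of_pos_left hm (linkRate_pos hW hg hp)
    (strictMonoOn_linkRate hW hg hp.le (hp.trans hpq).le hpq)

end Factors

section Latencies

variable {B β cI cF cC aI aF aC bI bF bC WIF WFC g h PtI PtF PtC p q T : ℝ} {x : Pt}

/-- The point `x` with its IoT processing and communication powers replaced by `p` and `q`. -/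
def Pt.withIoTPower (x : Pt) (p q : ℝ) : Pt :=
  { x with PpI := p, PcI := q }

lemma Feasible.withIoTPower (hx : Feasible B bI bF bC PtI PtF PtC x) (hp : bI < p) (hq : 0 < q)
    (hpq : p + q ≤ PtI) : Feasible B bI bF bC PtI PtF PtC (x.withIoTPower p q) := by
  obtain ⟨hk, hkm, hmB, -, -, -, hfogCloud⟩ := hx
  exact ⟨hk, hkm, hmB, hp, hq, hpq, hfogCloud⟩

lemma TIoT_pos (hcI : 0 < cI) (haI : 0 < aI) (hm : x.m < B) (hp : bI < x.PpI) :
    0 < TIoT B β cI aI bI x :=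
  mul_pos (mul_pos hcI (sub_pos.2 hm)) (unitProcessingTime_pos haI hp)

lemma TFog_pos (hcF : 0 ≤ cF) (haF : 0 < aF) (hWIF : 0 < WIF) (hg : 0 < g) (hm : 0 < x.m)
    (hkm : x.k ≤ x.m) (hq : 0 < x.PcI) (hpF : bF < x.PpF) : 0 < TFog β cF aF bF WIF g x :=
  add_pos_of_pos_of_nonneg (div_pos hm (linkRate_pos hWIF hg hq))
    (mul_nonneg (mul_nonneg hcF (sub_nonneg.2 hkm)) (unitProcessingTime_pos haF hpF).le)

lemma Ttot_pos (hB : 0 < B) (hcI : 0 < cI) (hcF : 0 ≤ cF) (haI : 0 < aI) (haF : 0 < aF)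
    (hWIF : 0 < WIF) (hg : 0 < g) (hx : Feasible B bI bF bC PtI PtF PtC x) :
    0 < Ttot B β cI cF cC aI aF aC bI bF bC WIF WFC g h x := by
  obtain ⟨-, hkm, hmB, hp, hq, -, hpF, -⟩ := hx
  rcases hmB.lt_or_eq with hm | hm
  · exact lt_max_of_lt_left (TIoT_pos hcI haI hm hp)
  · have hFog := TFog_pos (β := β) hcF haF hWIF hg (hm ▸ hB) hkm hq hpF
    exact lt_max_of_lt_right (lt_max_of_lt_left hFog)

lemma TIoT_withIoTPower_lt_of_le (hβ : 0 < β) (hcI : 0 < cI) (haI : 0 < aI) (hmB : x.m ≤ B)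
    (hpI : bI < x.PpI) (hp : x.PpI < p) (hT : 0 < T) (hle : TIoT B β cI aI bI x ≤ T) :
    TIoT B β cI aI bI (x.withIoTPower p q) < T := by
  rcases hmB.lt_or_eq with hm | hm
  · have htime : unitProcessingTime β aI bI p < unitProcessingTime β aI bI x.PpI :=
      strictAntiOn_unitProcessingTime hβ haI hpI (hpI.trans hp) hp
    exact (mul_lt_mul_of_pos_left htime (mul_pos hcI (sub_pos.2 hm))).trans_le hle
  · simpa [TIoT, Pt.withIoTPower, hm] using hT

lemma TFog_withIoTPower_lt_of_le (hWIF : 0 < WIF) (hg : 0 < g) (hk : 0 ≤ x.k) (hkm : x.k ≤ x.m)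
    (hqI : 0 < x.PcI) (hq : x.PcI < q) (hT : 0 < T) (hle : TFog β cF aF bF WIF g x ≤ T) :
    TFog β cF aF bF WIF g (x.withIoTPower p q) < T := by
  rcases (hk.trans hkm).eq_or_lt with hm | hm
  · have hk0 : x.k = 0 := le_antisymm (hkm.trans hm.ge) hk
    simpa [TFog, Pt.withIoTPower, ← hm, hk0] using hT
  · have huplink := div_linkRate_lt_div_linkRate hm hWIF hg hqI hq
    exact (add_lt_add_left huplink _).trans_le hle

lemma TCloud_withIoTPower_lt_of_le (hWIF : 0 < WIF) (hg : 0 < g) (hk : 0 ≤ x.k) (hkm : x.k ≤ x.m)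
    (hqI : 0 < x.PcI) (hq : x.PcI < q) (hT : 0 < T)
    (hle : TCloud β cC aC bC WIF WFC g h x ≤ T) :
    TCloud β cC aC bC WIF WFC g h (x.withIoTPower p q) < T := by
  rcases (hk.trans hkm).eq_or_lt with hm | hm
  · have hk0 : x.k = 0 := le_antisymm (hkm.trans hm.ge) hk
    simpa [TCloud, Pt.withIoTPower, ← hm, hk0] using hT
  · have huplink := div_linkRate_lt_div_linkRate hm hWIF hg hqI hq
    exact (add_lt_add_left (add_lt_add_left huplink _) _).trans_le hle

lemma Ttot_withIoTPower_lt (hB : 0 < B) (hβ : 0 < β) (hcI : 0 < cI) (hcF : 0 ≤ cF) (haI : 0 < aI)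
    (haF : 0 < aF) (hWIF : 0 < WIF) (hg : 0 < g) (hx : Feasible B bI bF bC PtI PtF PtC x)
    (hp : x.PpI < p) (hq : x.PcI < q) :
    Ttot B β cI cF cC aI aF aC bI bF bC WIF WFC g h (x.withIoTPower p q) <
      Ttot B β cI cF cC aI aF aC bI bF bC WIF WFC g h x := by
  have hT : 0 < Ttot B β cI cF cC aI aF aC bI bF bC WIF WFC g h x :=
    Ttot_pos hB hcI hcF haI haF hWIF hg hx
  obtain ⟨hk, hkm, hmB, hpI, hqI, -⟩ := hx
  refine max_lt ?iot (max_lt ?fog ?cloud)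
  case iot =>
    exact TIoT_withIoTPower_lt_of_le hβ hcI haI hmB hpI hp hT (le_max_left _ _)
  case fog =>
    exact TFog_withIoTPower_lt_of_le hWIF hg hk hkm hqI hq hT
      (le_max_of_le_right (le_max_left _ _))
  case cloud =>
    exact TCloud_withIoTPower_lt_of_le hWIF hg hk hkm hqI hq hT
      (le_max_of_le_right (le_max_right _ _))

theorem iot_power_constraint_tight_at_optimum_general (hB : 0 < B) (hβ : 0 < β) (hcI : 0 < cI)
    (hcF : 0 ≤ cF) (haI : 0 < aI) (haF : 0 < aF) (hWIF : 0 < WIF) (hg : 0 < g)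
    (hx : Feasible B bI bF bC PtI PtF PtC x)
    (hopt : ∀ p q, Feasible B bI bF bC PtI PtF PtC (x.withIoTPower p q) →
      Ttot B β cI cF cC aI aF aC bI bF bC WIF WFC g h x ≤
        Ttot B β cI cF cC aI aF aC bI bF bC WIF WFC g h (x.withIoTPower p q)) :
    x.PpI + x.PcI = PtI := by
  obtain ⟨-, -, -, hpI, hqI, hbudget, -⟩ := id hx
  refine hbudget.eq_or_lt.resolve_right fun hslack => ?_
  obtain ⟨δ, hδ, hδslack⟩ : ∃ δ > 0, x.PpI + δ + (x.PcI + δ) = PtI :=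
    ⟨(PtI - (x.PpI + x.PcI)) / 2, by linarith, by ring⟩
  have hp : x.PpI < x.PpI + δ := lt_add_of_pos_right _ hδ
  have hq : x.PcI < x.PcI + δ := lt_add_of_pos_right _ hδ
  have hfeasible := hx.withIoTPower (hpI.trans hp) (hqI.trans hq) hδslack.le
  exact (hopt _ _ hfeasible).not_gt
    (Ttot_withIoTPower_lt hB hβ hcI hcF haI haF hWIF hg hx hp hq)

end Latencies

/-- Lemma 1 (IoT layer): at an optimal point, `P_pI + P_cI = P_tI`. -/
theorem iot_power_constraint_tight_at_optimum
    (B β cI cF cC aI aF aC bI bF bC WIF WFC g h PtI PtF PtC : ℝ)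
    (hB : 0 < B) (hβ : 0 < β)
    (hcI : 0 < cI) (hcF : 0 < cF) (hcC : 0 < cC)
    (haI : 0 < aI) (haF : 0 < aF) (haC : 0 < aC)
    (hbI : 0 ≤ bI) (hbF : 0 ≤ bF) (hbC : 0 ≤ bC)
    (hWIF : 0 < WIF) (hWFC : 0 < WFC)
    (hg : 0 < g) (hh : 0 < h)
    (hPtI : bI < PtI) (hPtF : bF < PtF) (hPtC : bC < PtC)
    (x : Pt) (hx : Feasible B bI bF bC PtI PtF PtC x)
    (hopt : ∀ y : Pt, Feasible B bI bF bC PtI PtF PtC y → Ttot B β cI cF cC aI aF aC bI bF bC WIF WFC g h x ≤ Ttot B β cI cF cC aI aF aC bI bF bC WIF WFC g h y) :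
    x.PpI + x.PcI = PtI := by
  exact iot_power_constraint_tight_at_optimum_general hB hβ hcI hcF.le haI haF hWIF hg hx
    fun p q => hopt (x.withIoTPower p q)
end

section
/- Consequence of Lemma 1 at the level of optimal values: the infimum of T over F equals the infimum of T over the subset F_eq = {x ∈ F : P_pI + P_cI = P_tI, P_pF + P_cF = P_tF, P_pC = P_tC} of points that use their full power budgets at every layer. -/
/-!
With the workload split held fixed, every latency is antitone in each of the powers: transmission
times decrease with the transmit power and computation times with the computing power. Handing the
unused budget of each layer to its transmitter (to the processor in the cloud) therefore maps the
feasible set into its full-power part without increasing `T`, and the two infima agree.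
-/

open Real

/-- Time to transmit `n` bits over a channel of bandwidth `W` and normalized gain `γ` at transmit
power `P`, at the Shannon rate `W * log₂ (1 + γ * P)`. -/
noncomputable def transmissionTime (n W γ P : ℝ) : ℝ :=
  n / (W * logb 2 (1 + γ * P))

/-- Time to process `w` cycles at computing power `P`, when running at speed `s` costs power
`a * s ^ β + b`. -/
noncomputable def computationTime (w a b β P : ℝ) : ℝ :=
  w * ((P - b) / a) ^ (-(1 / β))

theorem antitoneOn_transmissionTime {n W γ : ℝ} (hn : 0 ≤ n) (hW : 0 < W) (hγ : 0 < γ) :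
    AntitoneOn (transmissionTime n W γ) (Set.Ioi 0) := by
  intro P (hP : 0 < P) Q _ hPQ
  have one_lt_one_add_snr : 1 < 1 + γ * P := lt_add_of_pos_right 1 (mul_pos hγ hP)
  have rate_pos : 0 < W * logb 2 (1 + γ * P) :=
    mul_pos hW (logb_pos one_lt_two one_lt_one_add_snr)
  have rate_le : W * logb 2 (1 + γ * P) ≤ W * logb 2 (1 + γ * Q) := by
    gcongr
    exact one_lt_two
  exact div_le_div_of_nonneg_left hn rate_pos rate_le

theorem antitoneOn_computationTime {w a b β : ℝ} (hw : 0 ≤ w) (ha : 0 < a) (hβ : 0 < β) :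
    AntitoneOn (computationTime w a b β) (Set.Ioi b) := by
  intro P (hP : b < P) Q _ hPQ
  have base_pos : 0 < (P - b) / a := div_pos (sub_pos.2 hP) ha
  have base_le : (P - b) / a ≤ (Q - b) / a := by gcongr
  have exponent_nonpos : -(1 / β) ≤ 0 := neg_nonpos.2 (one_div_pos.2 hβ).le
  exact mul_le_mul_of_nonneg_left (rpow_le_rpow_of_nonpos base_pos base_le exponent_nonpos) hw

namespace Pt

/-- The preorder `x.PowerLE y` in which latencies are compared: `y` splits the workload as `x` does
and spends at least as much power as `x` on every task. -/
structure PowerLE (x y : Pt) : Prop where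
  m_eq : y.m = x.m
  k_eq : y.k = x.k
  PpI_le : x.PpI ≤ y.PpI
  PcI_le : x.PcI ≤ y.PcI
  PpF_le : x.PpF ≤ y.PpF
  PcF_le : x.PcF ≤ y.PcF
  PpC_le : x.PpC ≤ y.PpC

/-- The point obtained from `x` by spending the whole of each power budget. In the IoT and fog
layers the surplus goes to communication, so that their computing powers are unchanged. -/
def saturate (PtI PtF PtC : ℝ) (x : Pt) : Pt :=
  { x with PcI := PtI - x.PpI, PcF := PtF - x.PpF, PpC := PtC }

end Pt

section Antitone

variable {x y : Pt} {β WIF g : ℝ}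

theorem TIoT_le_of_powerLE {B cI aI bI : ℝ} (hβ : 0 < β) (hcI : 0 ≤ cI) (haI : 0 < aI)
    (hmB : x.m ≤ B) (hPpI : bI < x.PpI) (hxy : x.PowerLE y) :
    TIoT B β cI aI bI y ≤ TIoT B β cI aI bI x := by
  have computation_le := antitoneOn_computationTime (mul_nonneg hcI (sub_nonneg.2 hmB)) haI hβ
    hPpI (hPpI.trans_le hxy.PpI_le) hxy.PpI_le
  simpa only [TIoT, computationTime, hxy.m_eq] using computation_le

theorem TFog_le_of_powerLE {cF aF bF : ℝ} (hβ : 0 < β) (hcF : 0 ≤ cF) (haF : 0 < aF)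
    (hWIF : 0 < WIF) (hg : 0 < g) (hm : 0 ≤ x.m) (hkm : x.k ≤ x.m) (hPcI : 0 < x.PcI)
    (hPpF : bF < x.PpF) (hxy : x.PowerLE y) :
    TFog β cF aF bF WIF g y ≤ TFog β cF aF bF WIF g x := by
  have transmission_le := antitoneOn_transmissionTime hm hWIF hg
    hPcI (hPcI.trans_le hxy.PcI_le) hxy.PcI_le
  have computation_le := antitoneOn_computationTime (mul_nonneg hcF (sub_nonneg.2 hkm)) haF hβ
    hPpF (hPpF.trans_le hxy.PpF_le) hxy.PpF_le
  simpa only [TFog, transmissionTime, computationTime, hxy.m_eq, hxy.k_eq] using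
    add_le_add transmission_le computation_le

theorem TCloud_le_of_powerLE {cC aC bC WFC h : ℝ} (hβ : 0 < β) (hcC : 0 ≤ cC) (haC : 0 < aC)
    (hWIF : 0 < WIF) (hWFC : 0 < WFC) (hg : 0 < g) (hh : 0 < h) (hm : 0 ≤ x.m) (hk : 0 ≤ x.k)
    (hPcI : 0 < x.PcI) (hPcF : 0 < x.PcF) (hPpC : bC < x.PpC) (hxy : x.PowerLE y) :
    TCloud β cC aC bC WIF WFC g h y ≤ TCloud β cC aC bC WIF WFC g h x := by
  have transmission_IF_le := antitoneOn_transmissionTime hm hWIF hg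
    hPcI (hPcI.trans_le hxy.PcI_le) hxy.PcI_le
  have transmission_FC_le := antitoneOn_transmissionTime hk hWFC hh
    hPcF (hPcF.trans_le hxy.PcF_le) hxy.PcF_le
  have computation_le := antitoneOn_computationTime (mul_nonneg hcC hk) haC hβ
    hPpC (hPpC.trans_le hxy.PpC_le) hxy.PpC_le
  simpa only [TCloud, transmissionTime, computationTime, hxy.m_eq, hxy.k_eq] using
    add_le_add (add_le_add transmission_IF_le transmission_FC_le) computation_le

end Antitone

namespace Feasible

variable {B bI bF bC PtI PtF PtC : ℝ} {x y : Pt}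

theorem powerLE_saturate (hx : Feasible B bI bF bC PtI PtF PtC x) :
    x.PowerLE (x.saturate PtI PtF PtC) := by
  obtain ⟨-, -, -, -, -, hI, -, -, hF, -, hC⟩ := hx
  exact ⟨rfl, rfl, le_rfl, le_sub_iff_add_le'.2 hI, le_rfl, le_sub_iff_add_le'.2 hF, hC⟩

theorem saturate (hx : Feasible B bI bF bC PtI PtF PtC x) :
    Feasible B bI bF bC PtI PtF PtC (x.saturate PtI PtF PtC) := by
  have hle := hx.powerLE_saturate
  obtain ⟨hk, hkm, hmB, hPpI, hPcI, -, hPpF, hPcF, -, hPpC, hC⟩ := hx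
  exact ⟨hk, hkm, hmB, hPpI, hPcI.trans_le hle.PcI_le, (add_sub_cancel _ _).le,
    hPpF, hPcF.trans_le hle.PcF_le, (add_sub_cancel _ _).le, hPpC.trans_le hC, le_rfl⟩

theorem Ttot_le_of_powerLE {β cI cF cC aI aF aC WIF WFC g h : ℝ} (hβ : 0 < β)
    (hcI : 0 ≤ cI) (hcF : 0 ≤ cF) (hcC : 0 ≤ cC) (haI : 0 < aI) (haF : 0 < aF) (haC : 0 < aC)
    (hWIF : 0 < WIF) (hWFC : 0 < WFC) (hg : 0 < g) (hh : 0 < h)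
    (hx : Feasible B bI bF bC PtI PtF PtC x) (hxy : x.PowerLE y) :
    Ttot B β cI cF cC aI aF aC bI bF bC WIF WFC g h y ≤
      Ttot B β cI cF cC aI aF aC bI bF bC WIF WFC g h x := by
  obtain ⟨hk, hkm, hmB, hPpI, hPcI, -, hPpF, hPcF, -, hPpC, -⟩ := hx
  have hm : 0 ≤ x.m := hk.trans hkm
  exact max_le_max (TIoT_le_of_powerLE hβ hcI haI hmB hPpI hxy) <|
    max_le_max (TFog_le_of_powerLE hβ hcF haF hWIF hg hm hkm hPcI hPpF hxy)
      (TCloud_le_of_powerLE hβ hcC haC hWIF hWFC hg hh hm hk hPcI hPcF hPpC hxy)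

end Feasible

/-- Consequence of Lemma 1 at the level of optimal values: the infimum of `T` over the
feasible set equals the infimum of `T` over the subset of points using full power budgets. -/
theorem inf_latency_eq_inf_over_full_power
    (B β cI cF cC aI aF aC bI bF bC WIF WFC g h PtI PtF PtC : ℝ)
    (hB : 0 < B) (hβ : 0 < β)
    (hcI : 0 < cI) (hcF : 0 < cF) (hcC : 0 < cC)
    (haI : 0 < aI) (haF : 0 < aF) (haC : 0 < aC)
    (hbI : 0 ≤ bI) (hbF : 0 ≤ bF) (hbC : 0 ≤ bC)
    (hWIF : 0 < WIF) (hWFC : 0 < WFC)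
    (hg : 0 < g) (hh : 0 < h)
    (hPtI : bI < PtI) (hPtF : bF < PtF) (hPtC : bC < PtC)
 :
    sInf ((Ttot B β cI cF cC aI aF aC bI bF bC WIF WFC g h) '' {x : Pt | Feasible B bI bF bC PtI PtF PtC x}) =
      sInf ((Ttot B β cI cF cC aI aF aC bI bF bC WIF WFC g h) ''
        {x : Pt | Feasible B bI bF bC PtI PtF PtC x ∧ x.PpI + x.PcI = PtI ∧ x.PpF + x.PcF = PtF ∧ x.PpC = PtC}) := by
  apply csInf_eq_csInf_of_forall_exists_le
  · rintro _ ⟨x, hx, rfl⟩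
    have Ttot_saturate_le := hx.Ttot_le_of_powerLE hβ hcI.le hcF.le hcC.le haI haF haC
      hWIF hWFC hg hh hx.powerLE_saturate
    exact ⟨_, ⟨x.saturate PtI PtF PtC,
      ⟨hx.saturate, add_sub_cancel _ _, add_sub_cancel _ _, rfl⟩, rfl⟩, Ttot_saturate_le⟩
  · rintro _ ⟨x, ⟨hx, -⟩, rfl⟩
    exact ⟨_, ⟨x, hx, rfl⟩, le_rfl⟩
end

section
/- Fundamental latency lower bound for the three-layer system: set K_I = ((P_tI − b_I)/a_I)^(−1/β) and K_c = 1/(W_IF·log₂(1 + g·P_tI)). Then for every feasible point x ∈ F, T(x) ≥ (c_I·K_I·B·K_c)/(c_I·K_I + K_c). (This follows because T(x) ≥ max(c_I·(B − m)·K_I, m·K_c) for the offloaded workload m of x, and the right-hand side, minimized over m, equals the stated bound.) -/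
/-!
No feasible point computes or transmits at the Internet-of-Things layer with more than the whole
budget `PtI`, so monotonicity in the power gives `T_I ≥ cI * KI * (B - m)` and `T_F ≥ m * Kc`. The
maximum of these two lines, of slopes `-cI * KI` and `Kc` in `m`, dominates their average with
weights proportional to `Kc` and `cI * KI`, in which `m` cancels; it is smallest where they cross.
-/

open Real

section LinearOrderedField

variable {K : Type*} [Field K] [LinearOrder K] [IsStrictOrderedRing K]

theorem isLeast_range_max_mul_sub_mul {a b : K} (ha : 0 ≤ a) (hb : 0 ≤ b) (hab : 0 < a + b)
    (c : K) :
    IsLeast (Set.range fun t ↦ max (a * (c - t)) (t * b)) (a * c * b / (a + b)) := by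
  constructor
  · have crossing_left : a * (c - a * c / (a + b)) = a * c * b / (a + b) := by
      field_simp
      ring
    have crossing_right : a * c / (a + b) * b = a * c * b / (a + b) := div_mul_eq_mul_div ..
    exact ⟨a * c / (a + b), by simp only [crossing_left, crossing_right, max_self]⟩
  · rintro _ ⟨t, rfl⟩
    have weights_add : b / (a + b) + a / (a + b) = 1 := by
      field_simp
      ring
    calc a * c * b / (a + b)
        = (b / (a + b)) • (a * (c - t)) + (a / (a + b)) • (t * b) := by
          simp only [smul_eq_mul]
          ring
      _ ≤ max (a * (c - t)) (t * b) :=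
          Convex.combo_le_max _ _ (div_nonneg hb hab.le) (div_nonneg ha hab.le) weights_add

end LinearOrderedField

/-- Time per unit of computation of a processor that draws power `P`, i.e. `1 / s` for the speed
`s` determined by the power model `P = a * s ^ β + b`. -/
noncomputable def cycleTime (β a b P : ℝ) : ℝ :=
  ((P - b) / a) ^ (-(1 / β))

theorem cycleTime_pos {β a b P : ℝ} (ha : 0 < a) (hP : b < P) : 0 < cycleTime β a b P :=
  rpow_pos_of_pos (div_pos (sub_pos.2 hP) ha) _

theorem antitoneOn_cycleTime {β a : ℝ} (hβ : 0 < β) (ha : 0 < a) (b : ℝ) :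
    AntitoneOn (cycleTime β a b) (Set.Ioi b) := by
  intro P hP Q _ hPQ
  have exponent_nonpos : -(1 / β) ≤ 0 := neg_nonpos.2 (one_div_pos.2 hβ).le
  have speed_pow_le : (P - b) / a ≤ (Q - b) / a := by gcongr
  exact rpow_le_rpow_of_nonpos (div_pos (sub_pos.2 hP) ha) speed_pow_le exponent_nonpos

/-- Time per bit on a link of bandwidth `W` and normalized gain `g` used with transmission power
`P`, i.e. the reciprocal of its Shannon rate. At `P = 0` the division gives `0`, not infinity. -/
noncomputable def bitTime (W g P : ℝ) : ℝ :=
  1 / (W * logb 2 (1 + g * P))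

theorem shannonRate_pos {W g P : ℝ} (hW : 0 < W) (hg : 0 < g) (hP : 0 < P) :
    0 < W * logb 2 (1 + g * P) :=
  mul_pos hW (logb_pos one_lt_two (lt_add_of_pos_right 1 (mul_pos hg hP)))

theorem bitTime_pos {W g P : ℝ} (hW : 0 < W) (hg : 0 < g) (hP : 0 < P) : 0 < bitTime W g P :=
  one_div_pos.2 (shannonRate_pos hW hg hP)

theorem antitoneOn_bitTime {W g : ℝ} (hW : 0 < W) (hg : 0 < g) :
    AntitoneOn (bitTime W g) (Set.Ioi 0) := by
  intro P (hP : 0 < P) Q _ hPQ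
  have rate_le : W * logb 2 (1 + g * P) ≤ W * logb 2 (1 + g * Q) := by
    gcongr
    exact one_lt_two
  exact one_div_le_one_div_of_le (shannonRate_pos hW hg hP) rate_le

namespace Feasible

variable {B β cI cF aI aF bI bF bC WIF g PtI PtF PtC : ℝ} {x : Pt}

theorem mul_cycleTime_le_TIoT (hx : Feasible B bI bF bC PtI PtF PtC x) (hβ : 0 < β)
    (hcI : 0 ≤ cI) (haI : 0 < aI) :
    cI * (B - x.m) * cycleTime β aI bI PtI ≤ TIoT B β cI aI bI x := by
  obtain ⟨-, -, hmB, hPpI, hPcI, hsum, -⟩ := hx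
  have hPpI_le : x.PpI ≤ PtI := by linarith
  exact mul_le_mul_of_nonneg_left
    (antitoneOn_cycleTime hβ haI bI hPpI (hPpI.trans_le hPpI_le) hPpI_le)
    (mul_nonneg hcI (sub_nonneg.2 hmB))

theorem mul_bitTime_le_TFog (hx : Feasible B bI bF bC PtI PtF PtC x) (hcF : 0 ≤ cF)
    (haF : 0 < aF) (hbI : 0 ≤ bI) (hWIF : 0 < WIF) (hg : 0 < g) :
    x.m * bitTime WIF g PtI ≤ TFog β cF aF bF WIF g x := by
  obtain ⟨hk, hkm, -, hPpI, hPcI, hsum, hPpF, -⟩ := hx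
  have hPcI_le : x.PcI ≤ PtI := by linarith
  have fog_computation_nonneg : 0 ≤ cF * (x.m - x.k) * cycleTime β aF bF x.PpF :=
    mul_nonneg (mul_nonneg hcF (sub_nonneg.2 hkm)) (cycleTime_pos haF hPpF).le
  calc x.m * bitTime WIF g PtI
      ≤ x.m * bitTime WIF g x.PcI :=
        mul_le_mul_of_nonneg_left
          (antitoneOn_bitTime hWIF hg hPcI (hPcI.trans_le hPcI_le) hPcI_le) (hk.trans hkm)
    _ = x.m / (WIF * logb 2 (1 + g * x.PcI)) := mul_one_div ..
    _ ≤ TFog β cF aF bF WIF g x := le_add_of_nonneg_right fog_computation_nonneg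

end Feasible

/-- Fundamental latency lower bound for the three-layer system. -/
theorem fundamental_latency_lower_bound
    (B β cI cF cC aI aF aC bI bF bC WIF WFC g h PtI PtF PtC : ℝ)
    (hB : 0 < B) (hβ : 0 < β)
    (hcI : 0 < cI) (hcF : 0 < cF) (hcC : 0 < cC)
    (haI : 0 < aI) (haF : 0 < aF) (haC : 0 < aC)
    (hbI : 0 ≤ bI) (hbF : 0 ≤ bF) (hbC : 0 ≤ bC)
    (hWIF : 0 < WIF) (hWFC : 0 < WFC)
    (hg : 0 < g) (hh : 0 < h)
    (hPtI : bI < PtI) (hPtF : bF < PtF) (hPtC : bC < PtC)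
    (KI Kc : ℝ)
    (hKI : KI = ((PtI - bI) / aI) ^ (-(1 / β)))
    (hKc : Kc = 1 / (WIF * Real.logb 2 (1 + g * PtI)))
    (x : Pt) (hx : Feasible B bI bF bC PtI PtF PtC x) :
    cI * KI * B * Kc / (cI * KI + Kc) ≤ Ttot B β cI cF cC aI aF aC bI bF bC WIF WFC g h x := by
  subst hKI hKc
  have hKI_pos : 0 < cycleTime β aI bI PtI := cycleTime_pos haI hPtI
  have hKc_pos : 0 < bitTime WIF g PtI := bitTime_pos hWIF hg (hbI.trans_lt hPtI)
  have ha : 0 < cI * cycleTime β aI bI PtI := mul_pos hcI hKI_pos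
  calc cI * cycleTime β aI bI PtI * B * bitTime WIF g PtI /
        (cI * cycleTime β aI bI PtI + bitTime WIF g PtI)
      ≤ max (cI * cycleTime β aI bI PtI * (B - x.m)) (x.m * bitTime WIF g PtI) :=
        (isLeast_range_max_mul_sub_mul ha.le hKc_pos.le (add_pos ha hKc_pos) B).2 ⟨x.m, rfl⟩
    _ = max (cI * (B - x.m) * cycleTime β aI bI PtI) (x.m * bitTime WIF g PtI) := by
        rw [mul_right_comm]
    _ ≤ max (TIoT B β cI aI bI x) (TFog β cF aF bF WIF g x) :=
        max_le_max (hx.mul_cycleTime_le_TIoT hβ hcI.le haI)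
          (hx.mul_bitTime_le_TFog hcF.le haF hbI hWIF hg)
    _ ≤ Ttot B β cI cF cC aI aF aC bI bF bC WIF WFC g h x :=
        max_le_max le_rfl (le_max_left _ _)
end
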